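/- The hexatag linearization is injective on binary head trees: for all BHTs T and T′, if hexatags(T) = hexatags(T′) then T = T′ (first half of Theorem 2 of the paper: every BHT maps to a unique hexatag sequence). -/

import Mathlib

/-- Binary head trees (BHTs). -/
inductive BHT : Type where
  | leaf : BHT
  | nodeL (l r : BHT) : BHT
  | nodeR (l r : BHT) : BHT

/-- Number of leaves of a BHT. -/
def BHT.numLeaves : BHT → ℕ
  | .leaf => 1
  | .nodeL l r => l.numLeaves + r.numLeaves
  | .nodeR l r => l.numLeaves + r.numLeaves

/-- Head position of a BHT whose span of leaf positions starts at `i`. -/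
def BHT.headAt : BHT → ℕ → ℕ
  | .leaf, i => i
  | .nodeL l _, i => l.headAt i
  | .nodeR l r, i => r.headAt (i + l.numLeaves)

/-- Head position of a BHT placed over positions `0, …, numLeaves - 1`. -/
def BHT.head (T : BHT) : ℕ := T.headAt 0

/-- Arc set of a BHT whose span of leaf positions starts at `i`. -/
def BHT.arcsAt : BHT → ℕ → Set (ℕ × ℕ)
  | .leaf, _ => ∅
  | .nodeL l r, i =>
      insert (l.headAt i, r.headAt (i + l.numLeaves)) (l.arcsAt i ∪ r.arcsAt (i + l.numLeaves))
  | .nodeR l r, i =>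
      insert (r.headAt (i + l.numLeaves), l.headAt i) (l.arcsAt i ∪ r.arcsAt (i + l.numLeaves))

/-- Arc set of a BHT placed over positions `0, …, numLeaves - 1`. -/
def BHT.arcs (T : BHT) : Set (ℕ × ℕ) := T.arcsAt 0

/-- `S` is a subtree of `T` (placed over positions `0, …, numLeaves - 1`) whose
leaf span starts at absolute position `i`. -/
inductive BHT.SubtreeAt : BHT → ℕ → BHT → Prop
  | refl (T : BHT) : BHT.SubtreeAt T 0 T
  | inlL (l r S : BHT) (i : ℕ) : BHT.SubtreeAt l i S → BHT.SubtreeAt (BHT.nodeL l r) i S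
  | inrL (l r S : BHT) (i : ℕ) :
      BHT.SubtreeAt r i S → BHT.SubtreeAt (BHT.nodeL l r) (l.numLeaves + i) S
  | inlR (l r S : BHT) (i : ℕ) : BHT.SubtreeAt l i S → BHT.SubtreeAt (BHT.nodeR l r) i S
  | inrR (l r S : BHT) (i : ℕ) :
      BHT.SubtreeAt r i S → BHT.SubtreeAt (BHT.nodeR l r) (l.numLeaves + i) S

/-- `bht2dep T j = some i` if `i` is the unique position with `(i, j) ∈ arcs T`,
and `none` if `j` has no incoming arc. -/
noncomputable def bht2dep (n : ℕ) (T : BHT) : Fin n → Option (Fin n) := fun j =>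
  letI := Classical.dec (∃! i : Fin n, ((i : ℕ), (j : ℕ)) ∈ T.arcs)
  if h : ∃! i : Fin n, ((i : ℕ), (j : ℕ)) ∈ T.arcs then some h.choose else none

/-- `head` is a dependency tree on `n` words: exactly one root (position with
`head r = none`), and every position reaches the root by iterating `head`. -/
def IsDepTree {n : ℕ} (head : Fin n → Option (Fin n)) : Prop :=
  ∃ r : Fin n, head r = none ∧ (∀ r' : Fin n, head r' = none → r' = r) ∧
    ∀ j : Fin n, Relation.ReflTransGen (fun a b => head a = some b) j r

/-- A dependency tree is projective if every position's set of descendants is an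
interval of consecutive positions. -/
def Projective {n : ℕ} (head : Fin n → Option (Fin n)) : Prop :=
  ∀ i : Fin n, ∃ a b : Fin n,
    ∀ j : Fin n, Relation.ReflTransGen (fun x y => head x = some y) j i ↔ (a ≤ j ∧ j ≤ b)

/-- The six hexatags: `tL`/`tR` are terminal tags (leaf that is a left/right child);
`leftL`/`leftR` are `⇐L`/`⇐R` (internal left child with head-label L/R);
`rightL`/`rightR` are `⇒L`/`⇒R` (internal right child with head-label L/R). -/
inductive Hexatag : Type where
  | tL | tR | leftL | leftR | rightL | rightR
deriving DecidableEq

/-- A hexatag is terminal if it is `tL` or `tR`. -/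
def Hexatag.isTerminal : Hexatag → Prop
  | .tL => True
  | .tR => True
  | _ => False

/-- In-order linearization; the Boolean records whether the current subtree is a
right child of its parent (the root counts as a left child by convention). -/
def BHT.hexatagsAux : BHT → Bool → List Hexatag
  | .leaf, false => [.tL]
  | .leaf, true => [.tR]
  | .nodeL l r, b =>
      l.hexatagsAux false ++ (if b then Hexatag.rightL else Hexatag.leftL) :: r.hexatagsAux true
  | .nodeR l r, b =>
      l.hexatagsAux false ++ (if b then Hexatag.rightR else Hexatag.leftR) :: r.hexatagsAux true

/-- The hexatag linearization of a BHT. -/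
def BHT.hexatags (T : BHT) : List Hexatag := T.hexatagsAux false

/-- The tags emitted for the leaves of a BHT, in left-to-right order. -/
def BHT.leafTagsAux : BHT → Bool → List Hexatag
  | .leaf, false => [.tL]
  | .leaf, true => [.tR]
  | .nodeL l r, _ => l.leafTagsAux false ++ r.leafTagsAux true
  | .nodeR l r, _ => l.leafTagsAux false ++ r.leafTagsAux true

/-- The tags emitted for the leaves of a BHT in left-to-right order (root
counts as a left child by convention). -/
def BHT.leafTags (T : BHT) : List Hexatag := T.leafTagsAux false

/-- Partial BHTs: binary head trees possibly containing a dummy placeholder. -/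
inductive PBHT : Type where
  | dummy : PBHT
  | leaf : PBHT
  | nodeL (l r : PBHT) : PBHT
  | nodeR (l r : PBHT) : PBHT
deriving DecidableEq

/-- Does a partial BHT contain a dummy? -/
def PBHT.hasDummy : PBHT → Bool
  | .dummy => true
  | .leaf => false
  | .nodeL l r => l.hasDummy || r.hasDummy
  | .nodeR l r => l.hasDummy || r.hasDummy

/-- Substitute `u` for the dummy in a partial BHT. -/
def PBHT.subst : PBHT → PBHT → PBHT
  | .dummy, u => u
  | .leaf, _ => .leaf
  | .nodeL l r, u => .nodeL (l.subst u) (r.subst u)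
  | .nodeR l r, u => .nodeR (l.subst u) (r.subst u)

/-- One step of the left-corner decoder on a stack of partial BHTs. -/
def hexStep : List PBHT → Hexatag → Option (List PBHT)
  | st, .tL => some (.leaf :: st)
  | t :: st, .tR => if t.hasDummy then some (t.subst .leaf :: st) else none
  | t :: st, .leftL => some (.nodeL t .dummy :: st)
  | t :: st, .leftR => some (.nodeR t .dummy :: st)
  | t :: u :: st, .rightL =>
      if u.hasDummy then some (u.subst (.nodeL t .dummy) :: st) else none
  | t :: u :: st, .rightR =>
      if u.hasDummy then some (u.subst (.nodeR t .dummy) :: st) else none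
  | _, _ => none

/-- The left-corner decoder: run the stack operations; succeed iff every
operation is defined and the final stack is a single dummy-free tree. -/
def tags2bht (τ : List Hexatag) : Option PBHT :=
  match τ.foldlM hexStep ([] : List PBHT) with
  | some [t] => if t.hasDummy then none else some t
  | _ => none

/-- Embedding of BHTs into partial BHTs. -/
def BHT.toPBHT : BHT → PBHT
  | .leaf => .leaf
  | .nodeL l r => .nodeL l.toPBHT r.toPBHT
  | .nodeR l r => .nodeR l.toPBHT r.toPBHT

/-- Stack-count increment of a hexatag. -/
def Hexatag.delta : Hexatag → ℤ
  | .tL => 1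
  | .tR => 0
  | .leftL => 0
  | .leftR => 0
  | .rightL => -1
  | .rightR => -1

/-- Running stack count `sₖ` after the first `k` tags of `τ`. -/
def stackCount (τ : List Hexatag) (k : ℕ) : ℤ :=
  ((τ.take k).map Hexatag.delta).sum

/-- Validity of a hexatag list (0-indexed: Lean index `k` is 1-indexed position `k+1`). -/
def ValidTags (τ : List Hexatag) : Prop :=
  (τ.length % 2 = 1 ∧
    ∀ k : ℕ, ∀ t : Hexatag, τ[k]? = some t →
      (k % 2 = 0 → t.isTerminal) ∧ (k % 2 = 1 → ¬ t.isTerminal)) ∧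
  τ[0]? = some Hexatag.tL ∧
  (∀ k : ℕ, ∀ t : Hexatag, τ[k]? = some t →
    (t = Hexatag.rightL ∨ t = Hexatag.rightR) → 2 ≤ stackCount τ k) ∧
  stackCount τ τ.length = 1

/-!
The left-corner decoder `tags2bht` inverts the linearization: reading the tags of a left child
pushes it onto the stack, and reading the tags of a right child plugs it into the hole of the
topmost partial tree. When the right child is internal, the decoder fills that hole in two stages,
first with a node whose right child is still a hole and then with that node's right child;
associativity of substitution shows that the two stages together plug in the whole subtree.
-/

namespace PBHT

theorem hasDummy_subst (t u : PBHT) : (t.subst u).hasDummy = (t.hasDummy && u.hasDummy) := by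
  induction t with
  | dummy | leaf => simp [subst, hasDummy]
  | nodeL l r hl hr | nodeR l r hl hr => simp [subst, hasDummy, hl, hr, Bool.and_or_distrib_right]

theorem subst_assoc (t u v : PBHT) : (t.subst u).subst v = t.subst (u.subst v) := by
  induction t with
  | dummy | leaf => rfl
  | nodeL l r hl hr | nodeR l r hl hr => simp only [subst, hl, hr]

theorem subst_of_hasDummy_eq_false {t : PBHT} (ht : t.hasDummy = false) (u : PBHT) :
    t.subst u = t := by
  induction t with
  | dummy => simp [hasDummy] at ht
  | leaf => rfl
  | nodeL l r hl hr | nodeR l r hl hr =>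
    obtain ⟨hl', hr'⟩ : l.hasDummy = false ∧ r.hasDummy = false := by simpa [hasDummy] using ht
    simp only [subst, hl hl', hr hr']

end PBHT

namespace BHT

theorem hasDummy_toPBHT (T : BHT) : T.toPBHT.hasDummy = false := by
  induction T with
  | leaf => rfl
  | nodeL l r hl hr | nodeR l r hl hr => simp [toPBHT, PBHT.hasDummy, hl, hr]

theorem toPBHT_injective : Function.Injective toPBHT := by
  intro T T' h
  induction T generalizing T' with
  | leaf => cases T' <;> simp_all [toPBHT]
  | nodeL l r hl hr | nodeR l r hl hr =>
    cases T' <;> simp only [toPBHT, PBHT.nodeL.injEq, PBHT.nodeR.injEq, reduceCtorEq] at h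
    rw [hl h.1, hr h.2]

theorem subst_toPBHT (T : BHT) (u : PBHT) : T.toPBHT.subst u = T.toPBHT :=
  PBHT.subst_of_hasDummy_eq_false T.hasDummy_toPBHT u

theorem foldlM_hexStep_hexatagsAux (T : BHT) :
    (∀ st, (T.hexatagsAux false).foldlM hexStep st = some (T.toPBHT :: st)) ∧
    (∀ t st, t.hasDummy = true →
      (T.hexatagsAux true).foldlM hexStep (t :: st) = some (t.subst T.toPBHT :: st)) := by
  induction T with
  | leaf => simp +contextual [hexatagsAux, hexStep, toPBHT]
  | nodeL l r hl hr | nodeR l r hl hr =>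
    obtain ⟨push_l, -⟩ := hl
    obtain ⟨-, plug_r⟩ := hr
    constructor
    · intro st
      rw [hexatagsAux, List.foldlM_append, push_l]
      simp [hexStep, plug_r, PBHT.hasDummy, PBHT.subst, subst_toPBHT, toPBHT]
    · intro t st ht
      rw [hexatagsAux, List.foldlM_append, push_l]
      have hole_remains (u : PBHT) (hu : u.hasDummy = true) : (t.subst u).hasDummy = true := by
        rw [PBHT.hasDummy_subst, ht, hu, Bool.and_self]
      simp [hexStep, ht, plug_r, hole_remains, PBHT.hasDummy, PBHT.subst_assoc, PBHT.subst,
        subst_toPBHT, toPBHT]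

theorem tags2bht_hexatags (T : BHT) : tags2bht T.hexatags = some T.toPBHT := by
  simp [tags2bht, hexatags, (foldlM_hexStep_hexatagsAux T).1, hasDummy_toPBHT]

end BHT

theorem hexatags_injective : Function.Injective BHT.hexatags := by
  intro T T' h
  apply BHT.toPBHT_injective
  apply Option.some_injective
  calc
    some T.toPBHT = tags2bht T.hexatags := T.tags2bht_hexatags.symm
    _ = tags2bht T'.hexatags := congrArg tags2bht h
    _ = some T'.toPBHT := T'.tags2bht_hexatags
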